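/- Let g be a continuous complex-valued function on the closed unit disk and ψ ∈ L¹(𝕋) bounded. If f : 𝔻 → ℂ satisfies f(z) = P_ψ(z) − G_g(z) for all z ∈ 𝔻 (equivalently, f ∈ C²(𝔻) with Δf = g and boundary values ψ), then for every z ∈ 𝔻 \ {0}: |f_z(z)| + |f_{z̄}(z)| ≤ (4‖P_ψ‖_∞/π)·1/(1−|z|²) + 2μ(|z|), where μ(r) = (‖g‖_∞(1−r²)/(8r²))·[(1+r²)/(1−r²) − ((1−r²)/(2r))·log((1+r)/(1−r))] for r ∈ (0,1). -/

import Mathlib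

open Metric MeasureTheory Set Filter

noncomputable section

/-- The Wirtinger derivative `∂f/∂z = (f_x - i f_y)/2`. -/
def wdz (f : ℂ → ℂ) (z : ℂ) : ℂ :=
  (fderiv ℝ f z 1 - Complex.I * fderiv ℝ f z Complex.I) / 2

/-- The Wirtinger derivative `∂f/∂z̄ = (f_x + i f_y)/2`. -/
def wdzbar (f : ℂ → ℂ) (z : ℂ) : ℂ :=
  (fderiv ℝ f z 1 + Complex.I * fderiv ℝ f z Complex.I) / 2

/-- The Laplacian `Δf = f_xx + f_yy` (equivalently `4 f_{z z̄}`). -/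
def lap (f : ℂ → ℂ) (z : ℂ) : ℂ :=
  fderiv ℝ (fun w => fderiv ℝ f w 1) z 1 +
    fderiv ℝ (fun w => fderiv ℝ f w Complex.I) z Complex.I

/-- The Poisson integral `P_ψ(z) = (1/2π) ∫₀^{2π} ((1-|z|²)/|1-z e^{-it}|²) ψ(e^{it}) dt`. -/
def poissonIntegral (ψ : ℂ → ℂ) (z : ℂ) : ℂ :=
  (1 / (2 * Real.pi) : ℝ) • ∫ t in (0:ℝ)..(2 * Real.pi),
    (((1 - ‖z‖ ^ 2) / ‖1 - z * Complex.exp (-(Complex.I * (t : ℂ)))‖ ^ 2 : ℝ) : ℂ) *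
      ψ (Complex.exp (Complex.I * (t : ℂ)))

/-- The Green potential `G_g(z) = (1/2π) ∫_𝔻 log|(1 - z w̄)/(z - w)| g(w) dA(w)`. -/
def greenPotential (g : ℂ → ℂ) (z : ℂ) : ℂ :=
  (1 / (2 * Real.pi) : ℝ) • ∫ w in ball (0:ℂ) 1,
    ((Real.log ‖(1 - z * (starRingEnd ℂ) w) / (z - w)‖ : ℝ) : ℂ) * g w

/-- `sup_{z ∈ 𝔻} |g(z)|`. -/
def supD (g : ℂ → ℂ) : ℝ := sSup ((fun z => ‖g z‖) '' ball (0:ℂ) 1)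

/-- The function `μ(r)` with constant `c` in place of `‖g‖_∞`. -/
def mu (c r : ℝ) : ℝ :=
  c * (1 - r ^ 2) / (8 * r ^ 2) *
    ((1 + r ^ 2) / (1 - r ^ 2) - (1 - r ^ 2) / (2 * r) * Real.log ((1 + r) / (1 - r)))

open scoped ComplexConjugate Topology

/-!
`f` is the difference of a bounded harmonic function `P_ψ` and a Green potential.

A rotation of `P_ψ` has real part bounded by its supremum `M`; that real part is the real part of
a holomorphic map of the disk into the strip `|Re ζ| < M`. Mapping the strip onto the disk by
`tan` and applying the Schwarz–Pick lemma gives the factor `4M/π`.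

The Green potential is differentiated under the integral sign, the Green kernel having only a
weak singularity, so that its derivative is at most `‖g‖_∞/(2π) · ∫ |∇_z G(z, w)| dA(w)`.
The Möbius involution of the disk exchanging `z` and `0` turns the integrand, on each circle about
`0`, into a multiple of a squared Poisson kernel, whose mean is explicit. What remains is an
elementary radial integral with value a multiple of `μ(|z|)`.
-/

lemma fderiv_apply_eq_wdz_mul_add_wdzbar_mul (f : ℂ → ℂ) (z v : ℂ) :
    fderiv ℝ f z v = wdz f z * v + wdzbar f z * conj v := by
  have hv : v = v.re • (1 : ℂ) + v.im • Complex.I := by simp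
  conv_lhs => rw [hv, map_add, map_smul, map_smul]
  simp only [wdz, wdzbar]
  apply Complex.ext <;> simp <;> ring

lemma exists_norm_eq_one_mul_eq_norm (x : ℂ) : ∃ α : ℂ, ‖α‖ = 1 ∧ α * x = ‖x‖ := by
  rcases eq_or_ne x 0 with rfl | hx
  · exact ⟨1, by simp⟩
  · exact ⟨‖x‖ / x, by simp [hx], by field_simp⟩

lemma exists_norm_eq_one_norm_mul_add_mul_conj (p q : ℂ) :
    ∃ v : ℂ, ‖v‖ = 1 ∧ ‖p * v + q * conj v‖ = ‖p‖ + ‖q‖ := by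
  obtain ⟨α, hα, hp⟩ := exists_norm_eq_one_mul_eq_norm p
  obtain ⟨β, hβ, hq⟩ := exists_norm_eq_one_mul_eq_norm q
  have hα₀ : α ≠ 0 := norm_pos_iff.mp (by simp [hα])
  have hβ₀ : β ≠ 0 := norm_pos_iff.mp (by simp [hβ])
  obtain ⟨v, hv⟩ := IsAlgClosed.exists_pow_nat_eq (α / β) two_pos
  have hv₁ : ‖v‖ = 1 := by
    rw [← pow_eq_one_iff_of_nonneg (norm_nonneg v) two_ne_zero, ← norm_pow, hv, norm_div, hα, hβ,
      div_one]
  have hv₀ : v ≠ 0 := norm_pos_iff.mp (by simp [hv₁])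
  refine ⟨v, hv₁, ?_⟩
  have parallel : p * v + q * conj v = (‖p‖ + ‖q‖ : ℝ) * (v / α) := by
    rw [← Complex.inv_eq_conj hv₁, Complex.ofReal_add, ← hp, ← hq]
    field_simp
    rw [hv]
    field_simp
  rw [parallel, norm_mul, norm_div, hv₁, hα, div_one, mul_one,
    Complex.norm_of_nonneg (by positivity)]

lemma norm_wdz_add_norm_wdzbar (f : ℂ → ℂ) (z : ℂ) :
    ‖wdz f z‖ + ‖wdzbar f z‖ = ‖fderiv ℝ f z‖ := by
  apply le_antisymm
  · obtain ⟨v, hv, hsum⟩ := exists_norm_eq_one_norm_mul_add_mul_conj (wdz f z) (wdzbar f z)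
    rw [← hsum, ← fderiv_apply_eq_wdz_mul_add_wdzbar_mul]
    exact (fderiv ℝ f z).unit_le_opNorm v hv.le
  · refine ContinuousLinearMap.opNorm_le_bound _ (by positivity) fun v => ?_
    rw [fderiv_apply_eq_wdz_mul_add_wdzbar_mul, add_mul]
    exact (norm_add_le _ _).trans_eq (by simp)

/-! ### Schwarz–Pick lemmas for the disk and for a strip -/

/-- The involutive automorphism of the unit disk which exchanges `0` and `a`. -/
def mobius (a w : ℂ) : ℂ := (a - w) / (1 - conj a * w)

lemma norm_one_sub_conj_mul_sq_sub (a w : ℂ) :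
    ‖1 - conj a * w‖ ^ 2 - ‖a - w‖ ^ 2 = (1 - ‖a‖ ^ 2) * (1 - ‖w‖ ^ 2) := by
  simp only [← Complex.normSq_eq_norm_sq, Complex.normSq_apply]
  simp
  ring

lemma one_sub_norm_sq_pos {a : ℂ} (ha : ‖a‖ < 1) : 0 < 1 - ‖a‖ ^ 2 := by
  nlinarith [norm_nonneg a]

lemma one_sub_conj_mul_self (a : ℂ) : 1 - conj a * a = (1 - ‖a‖ ^ 2 : ℝ) := by
  rw [Complex.conj_mul']
  push_cast
  rfl

lemma one_sub_conj_mul_ne_zero {a w : ℂ} (ha : ‖a‖ < 1) (hw : ‖w‖ ≤ 1) : 1 - conj a * w ≠ 0 := by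
  intro h
  have hprod : ‖a‖ * ‖w‖ = 1 := by
    simpa using (congrArg norm (sub_eq_zero.mp h)).symm
  nlinarith [norm_nonneg a, norm_nonneg w]

lemma mobius_zero_right (a : ℂ) : mobius a 0 = a := by simp [mobius]

lemma mobius_self (a : ℂ) : mobius a a = 0 := by simp [mobius]

lemma one_sub_norm_mobius_sq {a w : ℂ} (ha : ‖a‖ < 1) (hw : ‖w‖ < 1) :
    1 - ‖mobius a w‖ ^ 2 = (1 - ‖a‖ ^ 2) * (1 - ‖w‖ ^ 2) / ‖1 - conj a * w‖ ^ 2 := by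
  have hden : ‖1 - conj a * w‖ ≠ 0 := norm_ne_zero_iff.mpr (one_sub_conj_mul_ne_zero ha hw.le)
  rw [← norm_one_sub_conj_mul_sq_sub, mobius, norm_div, div_pow, sub_div,
    div_self (pow_ne_zero 2 hden)]

lemma mobius_mem_ball {a w : ℂ} (ha : ‖a‖ < 1) (hw : w ∈ ball (0 : ℂ) 1) :
    mobius a w ∈ ball (0 : ℂ) 1 := by
  rw [mem_ball_zero_iff] at hw ⊢
  have hden : ‖1 - conj a * w‖ ≠ 0 := norm_ne_zero_iff.mpr (one_sub_conj_mul_ne_zero ha hw.le)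
  have hpos : 0 < 1 - ‖mobius a w‖ ^ 2 := by
    rw [one_sub_norm_mobius_sq ha hw]
    have := one_sub_norm_sq_pos ha
    have := one_sub_norm_sq_pos hw
    positivity
  exact (sq_lt_one_iff₀ (norm_nonneg _)).mp (sub_pos.mp hpos)

lemma hasDerivAt_mobius {a w : ℂ} (ha : ‖a‖ < 1) (hw : ‖w‖ < 1) :
    HasDerivAt (mobius a) (-((1 - ‖a‖ ^ 2 : ℝ) : ℂ) / (1 - conj a * w) ^ 2) w := by
  have hnum : HasDerivAt (fun w : ℂ => a - w) (-1) w := (hasDerivAt_id w).const_sub a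
  have hden : HasDerivAt (fun w : ℂ => 1 - conj a * w) (-conj a) w := by
    simpa using ((hasDerivAt_id w).const_mul (conj a)).const_sub 1
  convert! hnum.div hden (one_sub_conj_mul_ne_zero ha hw.le) using 1
  rw [← one_sub_conj_mul_self]
  ring

lemma sub_mobius {a w : ℂ} (ha : ‖a‖ < 1) (hw : ‖w‖ < 1) :
    a - mobius a w = w * (1 - ‖a‖ ^ 2 : ℝ) / (1 - conj a * w) := by
  have hden := one_sub_conj_mul_ne_zero ha hw.le
  rw [← one_sub_conj_mul_self, mobius, eq_div_iff hden, sub_mul, div_mul_cancel₀ _ hden]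
  ring

lemma one_sub_conj_mul_mobius {a w : ℂ} (ha : ‖a‖ < 1) (hw : ‖w‖ < 1) :
    1 - conj a * mobius a w = (1 - ‖a‖ ^ 2 : ℝ) / (1 - conj a * w) := by
  have hden := one_sub_conj_mul_ne_zero ha hw.le
  rw [← one_sub_conj_mul_self, mobius]
  field_simp
  ring

lemma mobius_mobius {a w : ℂ} (ha : ‖a‖ < 1) (hw : ‖w‖ < 1) : mobius a (mobius a w) = w := by
  have hden := one_sub_conj_mul_ne_zero ha hw.le
  have ha' : ((1 - ‖a‖ ^ 2 : ℝ) : ℂ) ≠ 0 := by exact_mod_cast (one_sub_norm_sq_pos ha).ne'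
  rw [mobius, sub_mobius ha hw, one_sub_conj_mul_mobius ha hw, div_div_div_cancel_right₀ hden,
    mul_div_cancel_right₀ _ ha']

lemma bijOn_mobius {a : ℂ} (ha : ‖a‖ < 1) : BijOn (mobius a) (ball 0 1) (ball 0 1) :=
  have hinv : LeftInvOn (mobius a) (mobius a) (ball 0 1) := fun _ hw =>
    mobius_mobius ha (mem_ball_zero_iff.mp hw)
  have hmaps : MapsTo (mobius a) (ball 0 1) (ball 0 1) := fun _ => mobius_mem_ball ha
  InvOn.bijOn ⟨hinv, hinv⟩ hmaps hmaps

lemma norm_deriv_le_of_mapsTo_ball {φ : ℂ → ℂ} (hφ : DifferentiableOn ℂ φ (ball 0 1))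
    (hmaps : MapsTo φ (ball 0 1) (ball 0 1)) {z : ℂ} (hz : z ∈ ball (0 : ℂ) 1) :
    ‖deriv φ z‖ ≤ (1 - ‖φ z‖ ^ 2) / (1 - ‖z‖ ^ 2) := by
  have hz₁ : ‖z‖ < 1 := mem_ball_zero_iff.mp hz
  have hφz₁ : ‖φ z‖ < 1 := mem_ball_zero_iff.mp (hmaps hz)
  have hdiff : ∀ a : ℂ, ‖a‖ < 1 → DifferentiableOn ℂ (mobius a) (ball 0 1) := fun a ha w hw =>
    (hasDerivAt_mobius ha (mem_ball_zero_iff.mp hw)).differentiableAt.differentiableWithinAt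
  have hmaps_z : MapsTo (φ ∘ mobius z) (ball 0 1) (ball 0 1) :=
    hmaps.comp fun _ => mobius_mem_ball hz₁
  have hzero : (mobius (φ z) ∘ φ ∘ mobius z) 0 = 0 := by
    simp only [Function.comp_apply, mobius_zero_right, mobius_self]
  have hschwarz : ‖deriv (mobius (φ z) ∘ φ ∘ mobius z) 0‖ ≤ 1 := by
    refine Complex.norm_deriv_le_one_of_mapsTo_ball (R := 1) ?_ ?_ one_pos
    · exact (hdiff _ hφz₁).comp (hφ.comp (hdiff z hz₁) fun _ => mobius_mem_ball hz₁) hmaps_z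
    · rw [hzero]
      exact fun w hw => ball_subset_closedBall (mobius_mem_ball hφz₁ (hmaps_z hw))
  have hφ' : HasDerivAt φ (deriv φ z) (mobius z 0) := by
    rw [mobius_zero_right]
    exact (hφ.differentiableAt (isOpen_ball.mem_nhds hz)).hasDerivAt
  have hout := hasDerivAt_mobius hφz₁ hφz₁
  rw [← congrArg φ (mobius_zero_right z)] at hout
  have hchain := hout.comp (0 : ℂ) (hφ'.comp (0 : ℂ) (hasDerivAt_mobius hz₁ (by simp)))
  have hz_pos := one_sub_norm_sq_pos hz₁
  have hφz_pos := one_sub_norm_sq_pos hφz₁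
  rw [mobius_zero_right] at hchain
  rw [hchain.deriv, one_sub_conj_mul_self] at hschwarz
  simp only [norm_mul, norm_div, norm_neg, norm_pow, Complex.norm_of_nonneg hz_pos.le,
    Complex.norm_of_nonneg hφz_pos.le, mul_zero, sub_zero, one_pow, div_one] at hschwarz
  field_simp at hschwarz
  rwa [le_div_iff₀ hz_pos]

lemma cos_two_mul_re_pos {w : ℂ} (hw : |w.re| < Real.pi / 4) :
    0 < Real.cos (2 * w.re) := by
  have := abs_lt.mp hw
  exact Real.cos_pos_of_mem_Ioo ⟨by linarith, by linarith⟩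

lemma norm_cos_sq_sub_norm_sin_sq (w : ℂ) :
    ‖Complex.cos w‖ ^ 2 - ‖Complex.sin w‖ ^ 2 = Real.cos (2 * w.re) := by
  have h : ((‖Complex.cos w‖ ^ 2 - ‖Complex.sin w‖ ^ 2 : ℝ) : ℂ) = (Real.cos (2 * w.re) : ℝ) := by
    push_cast
    rw [← Complex.mul_conj', ← Complex.mul_conj', ← Complex.cos_conj, ← Complex.sin_conj,
      ← Complex.cos_add, Complex.add_conj]
    push_cast
    rfl
  exact_mod_cast h

lemma one_sub_norm_tan_sq {w : ℂ} (hw : Complex.cos w ≠ 0) :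
    1 - ‖Complex.tan w‖ ^ 2 = Real.cos (2 * w.re) / ‖Complex.cos w‖ ^ 2 := by
  have : ‖Complex.cos w‖ ≠ 0 := norm_ne_zero_iff.mpr hw
  rw [← norm_cos_sq_sub_norm_sin_sq, Complex.tan, norm_div]
  field_simp

lemma cos_ne_zero_of_abs_re_lt {w : ℂ} (hw : |w.re| < Real.pi / 4) : Complex.cos w ≠ 0 := by
  intro hcos
  have hpos := cos_two_mul_re_pos hw
  rw [← norm_cos_sq_sub_norm_sin_sq, hcos, norm_zero] at hpos
  nlinarith [sq_nonneg ‖Complex.sin w‖]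

lemma norm_tan_lt_one {w : ℂ} (hw : |w.re| < Real.pi / 4) : ‖Complex.tan w‖ < 1 := by
  have hcos : 0 < ‖Complex.cos w‖ := norm_pos_iff.mpr (cos_ne_zero_of_abs_re_lt hw)
  have hpos : 0 < 1 - ‖Complex.tan w‖ ^ 2 := by
    rw [one_sub_norm_tan_sq (cos_ne_zero_of_abs_re_lt hw)]
    exact div_pos (cos_two_mul_re_pos hw) (by positivity)
  exact (sq_lt_one_iff₀ (norm_nonneg _)).mp (sub_pos.mp hpos)

lemma norm_deriv_le_of_abs_re_lt_pi_div_four {h : ℂ → ℂ} (hh : DifferentiableOn ℂ h (ball 0 1))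
    (hre : ∀ w ∈ ball (0 : ℂ) 1, |(h w).re| < Real.pi / 4) {z : ℂ} (hz : z ∈ ball (0 : ℂ) 1) :
    ‖deriv h z‖ ≤ 1 / (1 - ‖z‖ ^ 2) := by
  have htan : ∀ w ∈ ball (0 : ℂ) 1, HasDerivAt (fun w => Complex.tan (h w))
      (1 / Complex.cos (h w) ^ 2 * deriv h w) w := fun w hw =>
    (Complex.hasDerivAt_tan (cos_ne_zero_of_abs_re_lt (hre w hw))).comp w
      (hh.differentiableAt (isOpen_ball.mem_nhds hw)).hasDerivAt
  have hpick := norm_deriv_le_of_mapsTo_ball (φ := fun w => Complex.tan (h w))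
    (fun w hw => (htan w hw).differentiableAt.differentiableWithinAt)
    (fun w hw => mem_ball_zero_iff.mpr (norm_tan_lt_one (hre w hw))) hz
  have hcos := cos_ne_zero_of_abs_re_lt (hre z hz)
  have hcos_pos : 0 < ‖Complex.cos (h z)‖ := norm_pos_iff.mpr hcos
  have hz_pos := one_sub_norm_sq_pos (mem_ball_zero_iff.mp hz)
  rw [(htan z hz).deriv, one_sub_norm_tan_sq hcos, norm_mul, norm_div, norm_one, norm_pow,
    one_div_mul_eq_div, div_right_comm, div_le_div_iff_of_pos_right (by positivity)] at hpick
  exact hpick.trans (by gcongr; exact Real.cos_le_one _)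

lemma norm_deriv_le_of_abs_re_lt {h : ℂ → ℂ} {M : ℝ} (hh : DifferentiableOn ℂ h (ball 0 1))
    (hre : ∀ w ∈ ball (0 : ℂ) 1, |(h w).re| < M) {z : ℂ} (hz : z ∈ ball (0 : ℂ) 1) :
    ‖deriv h z‖ ≤ 4 * M / Real.pi * (1 / (1 - ‖z‖ ^ 2)) := by
  have hM : 0 < M := (abs_nonneg _).trans_lt (hre z hz)
  set k : ℝ := Real.pi / (4 * M) with hk
  have hk_pos : 0 < k := by positivity
  have hscaled := norm_deriv_le_of_abs_re_lt_pi_div_four (hh.const_mul (k : ℂ))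
    (fun w hw => by
      rw [Complex.re_ofReal_mul, abs_mul, abs_of_pos hk_pos,
        show Real.pi / 4 = k * M by rw [hk]; field_simp]
      exact mul_lt_mul_of_pos_left (hre w hw) hk_pos) hz
  rw [deriv_const_mul _ (hh.differentiableAt (isOpen_ball.mem_nhds hz)), norm_mul,
    Complex.norm_of_nonneg hk_pos.le, ← le_div_iff₀' hk_pos] at hscaled
  refine hscaled.trans_eq ?_
  rw [hk]
  field_simp

lemma norm_deriv_le_of_abs_re_le {h : ℂ → ℂ} {M : ℝ} (hh : DifferentiableOn ℂ h (ball 0 1))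
    (hre : ∀ w ∈ ball (0 : ℂ) 1, |(h w).re| ≤ M) {z : ℂ} (hz : z ∈ ball (0 : ℂ) 1) :
    ‖deriv h z‖ ≤ 4 * M / Real.pi * (1 / (1 - ‖z‖ ^ 2)) := by
  have hcont : Continuous fun N : ℝ => 4 * N / Real.pi * (1 / (1 - ‖z‖ ^ 2)) := by fun_prop
  refine ge_of_tendsto (hcont.continuousWithinAt (s := Ioi M)) ?_
  filter_upwards [self_mem_nhdsWithin] with N hN
  exact norm_deriv_le_of_abs_re_lt hh (fun w hw => (hre w hw).trans_lt hN) hz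

lemma hasFDerivAt_add_conj {h k : ℂ → ℂ} {h' k' z : ℂ} (hh : HasDerivAt h h' z)
    (hk : HasDerivAt k k' z) :
    HasFDerivAt (fun w => h w + conj (k w))
      ((ContinuousLinearMap.toSpanSingleton ℂ h').restrictScalars ℝ +
        Complex.conjCLE.toContinuousLinearMap ∘L
          (ContinuousLinearMap.toSpanSingleton ℂ k').restrictScalars ℝ) z :=
  (hh.hasFDerivAt.restrictScalars ℝ).add
    (Complex.conjCLE.toContinuousLinearMap.hasFDerivAt.comp z (hk.hasFDerivAt.restrictScalars ℝ))

lemma norm_fderiv_add_conj_le {h k : ℂ → ℂ} {M : ℝ} (hh : DifferentiableOn ℂ h (ball 0 1))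
    (hk : DifferentiableOn ℂ k (ball 0 1))
    (hM : ∀ w ∈ ball (0 : ℂ) 1, ‖h w + conj (k w)‖ ≤ M) {z : ℂ} (hz : z ∈ ball (0 : ℂ) 1) :
    ‖fderiv ℝ (fun w => h w + conj (k w)) z‖ ≤ 4 * M / Real.pi * (1 / (1 - ‖z‖ ^ 2)) := by
  have hz_nhds := isOpen_ball.mem_nhds hz
  have hh' := (hh.differentiableAt hz_nhds).hasDerivAt
  have hk' := (hk.differentiableAt hz_nhds).hasDerivAt
  have hM₀ : 0 ≤ M := (norm_nonneg _).trans (hM z hz)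
  have hz_pos := one_sub_norm_sq_pos (mem_ball_zero_iff.mp hz)
  refine ContinuousLinearMap.opNorm_le_bound _ (by positivity) fun v => ?_
  obtain ⟨α, hα, hαL⟩ :=
    exists_norm_eq_one_mul_eq_norm (fderiv ℝ (fun w => h w + conj (k w)) z v)
  -- Rotated by `α`, the harmonic map has the same real part as the holomorphic `α h + ᾱ k`.
  set H : ℂ → ℂ := fun w => α * h w + conj α * k w with hH
  have hH' : HasDerivAt H (α * deriv h z + conj α * deriv k z) z :=
    (hh'.const_mul α).add (hk'.const_mul (conj α))
  have hbound : ‖deriv H z‖ ≤ 4 * M / Real.pi * (1 / (1 - ‖z‖ ^ 2)) := by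
    refine norm_deriv_le_of_abs_re_le ((hh.const_mul α).add (hk.const_mul (conj α)))
      (fun w hw => ?_) hz
    calc |(H w).re| = |(α * (h w + conj (k w))).re| := by simp [hH]; ring_nf
      _ ≤ ‖α * (h w + conj (k w))‖ := Complex.abs_re_le_norm _
      _ ≤ M := by rw [norm_mul, hα, one_mul]; exact hM w hw
  calc ‖fderiv ℝ (fun w => h w + conj (k w)) z v‖
      = (α * fderiv ℝ (fun w => h w + conj (k w)) z v).re := by rw [hαL, Complex.ofReal_re]
    _ = (deriv H z * v).re := by
      rw [(hasFDerivAt_add_conj hh' hk').fderiv, hH'.deriv]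
      simp
      ring
    _ ≤ ‖deriv H z‖ * ‖v‖ := (Complex.re_le_norm _).trans_eq (norm_mul _ _)
    _ ≤ _ := by gcongr

/-! ### Poisson integrals -/

lemma exp_I_mul_eq_circleMap (t : ℝ) : Complex.exp (Complex.I * t) = circleMap 0 1 t := by
  simp [circleMap, mul_comm]

lemma poissonIntegral_eq_circleAverage (ψ : ℂ → ℂ) (z : ℂ) :
    poissonIntegral ψ z = Real.circleAverage (poissonKernel 0 z • ψ) 0 1 := by
  rw [poissonIntegral, Real.circleAverage_def, one_div]
  refine congrArg _ (intervalIntegral.integral_congr fun t _ => ?_)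
  have hnorm : ‖1 - z * Complex.exp (-(Complex.I * t))‖ = ‖circleMap 0 1 t - z‖ := by
    have hζ : ‖circleMap 0 1 t‖ = 1 := by simp
    have hζ₀ : circleMap 0 1 t ≠ 0 := circleMap_ne_center one_ne_zero
    rw [Complex.exp_neg, exp_I_mul_eq_circleMap, ← div_eq_mul_inv, one_sub_div hζ₀, norm_div, hζ,
      div_one]
  simp only [hnorm, exp_I_mul_eq_circleMap, Pi.smul_apply', poissonKernel_def, sub_zero,
    norm_circleMap_zero, abs_one, one_pow, Complex.real_smul]

lemma continuousOn_poissonKernel_sphere {z : ℂ} (hz : z ∈ ball (0 : ℂ) 1) :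
    ContinuousOn (poissonKernel 0 z) (sphere 0 |1|) := by
  rw [poissonKernel_eq_re_herglotzRieszKernel]
  exact Complex.continuous_re.comp_continuousOn (continuousOn_herglotzRieszKernel_sphere hz)

lemma poissonKernel_nonneg {z ζ : ℂ} (hz : z ∈ ball (0 : ℂ) 1) (hζ : ζ ∈ sphere (0 : ℂ) 1) :
    0 ≤ poissonKernel 0 z ζ := by
  rw [poissonKernel_def, sub_zero, sub_zero, mem_sphere_zero_iff_norm.mp hζ, one_pow]
  exact div_nonneg (one_sub_norm_sq_pos (mem_ball_zero_iff.mp hz)).le (by positivity)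

lemma circleAverage_poissonKernel {z : ℂ} (hz : z ∈ ball (0 : ℂ) 1) :
    Real.circleAverage (poissonKernel 0 z) 0 1 = 1 := by
  have hint : CircleIntegrable (poissonKernel 0 z) 0 1 :=
    (continuousOn_poissonKernel_sphere hz).circleIntegrable'
  have hone := (diffContOnCl_const (c := (1 : ℂ))).circleAverage_poissonKernel_smul hz
  have hcomm := Complex.ofRealCLM.circleAverage_comp_comm hint
  rw [show (Complex.ofRealCLM ∘ poissonKernel 0 z) = poissonKernel 0 z • fun _ => (1 : ℂ) by
    ext; simp, hone] at hcomm
  exact Complex.ofReal_injective hcomm.symm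

lemma norm_circleAverage_le {E : Type*} [NormedAddCommGroup E] [NormedSpace ℝ E] (f : ℂ → E)
    (c : ℂ) (R : ℝ) :
    ‖Real.circleAverage f c R‖ ≤ Real.circleAverage (fun ζ => ‖f ζ‖) c R := by
  rw [Real.circleAverage_def, Real.circleAverage_def, norm_smul,
    Real.norm_of_nonneg (by positivity), smul_eq_mul]
  gcongr
  exact intervalIntegral.norm_integral_le_integral_norm (by positivity)

lemma norm_poissonIntegral_le {ψ : ℂ → ℂ} {C : ℝ} (hψ : CircleIntegrable ψ 0 1)
    (hC : ∀ ζ ∈ sphere (0 : ℂ) 1, ‖ψ ζ‖ ≤ C) {z : ℂ} (hz : z ∈ ball (0 : ℂ) 1) :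
    ‖poissonIntegral ψ z‖ ≤ C := by
  have hK := continuousOn_poissonKernel_sphere hz
  rw [poissonIntegral_eq_circleAverage]
  calc ‖Real.circleAverage (poissonKernel 0 z • ψ) 0 1‖
      ≤ Real.circleAverage (fun ζ => ‖(poissonKernel 0 z • ψ) ζ‖) 0 1 := norm_circleAverage_le _ _ _
    _ ≤ Real.circleAverage (C • poissonKernel 0 z) 0 1 := by
      refine Real.circleAverage_mono (hψ.continuousOn_smul hK).norm
        (hK.circleIntegrable'.const_smul) fun ζ hζ => ?_
      rw [abs_one] at hζ
      have hK₀ := poissonKernel_nonneg hz hζ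
      rw [Pi.smul_apply', norm_smul, Real.norm_of_nonneg hK₀, Pi.smul_apply, smul_eq_mul, mul_comm]
      exact mul_le_mul_of_nonneg_right (hC ζ hζ) hK₀
    _ = C := by rw [Real.circleAverage_smul, circleAverage_poissonKernel hz, smul_eq_mul, mul_one]

lemma circleIntegrable_clm_comp {E F : Type*} [NormedAddCommGroup E] [NormedSpace ℝ E]
    [NormedAddCommGroup F] [NormedSpace ℝ F] (L : E →L[ℝ] F) {f : ℂ → E} {c : ℂ} {R : ℝ}
    (hf : CircleIntegrable f c R) : CircleIntegrable (L ∘ f) c R :=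
  ⟨L.integrable_comp hf.1, L.integrable_comp hf.2⟩

/-- The Herglotz–Riesz transform of a function on the unit circle, a holomorphic function on the
unit disk whose real part is the Poisson integral when the boundary function is real. -/
def herglotzTransform (ψ : ℂ → ℂ) (z : ℂ) : ℂ :=
  Real.circleAverage (herglotzRieszKernel 0 z • ψ) 0 1

lemma differentiableOn_herglotzTransform {ψ : ℂ → ℂ} (hψ : CircleIntegrable ψ 0 1) :
    DifferentiableOn ℂ (herglotzTransform ψ) (ball 0 1) :=
  differentiableOn_circleAverage_herglotzRieszKernel_smul hψ

lemma circleIntegrable_conj_comp {ψ : ℂ → ℂ} (hψ : CircleIntegrable ψ 0 1) :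
    CircleIntegrable (conj ∘ ψ) 0 1 :=
  circleIntegrable_clm_comp Complex.conjCLE.toContinuousLinearMap hψ

lemma poissonIntegral_eq_herglotzTransform_add_conj {ψ : ℂ → ℂ} (hψ : CircleIntegrable ψ 0 1)
    {z : ℂ} (hz : z ∈ ball (0 : ℂ) 1) :
    poissonIntegral ψ z =
      herglotzTransform ψ z / 2 + conj (herglotzTransform (conj ∘ ψ) z / 2) := by
  have hK := continuousOn_herglotzRieszKernel_sphere hz
  have hint := hψ.continuousOn_smul hK
  have hint_conj := (circleIntegrable_conj_comp hψ).continuousOn_smul hK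
  have hconj := Complex.conjCLE.toContinuousLinearMap.circleAverage_comp_comm hint_conj
  have hsplit : poissonKernel 0 z • ψ = (2 : ℂ)⁻¹ • (herglotzRieszKernel 0 z • ψ +
      Complex.conjCLE.toContinuousLinearMap ∘ (herglotzRieszKernel 0 z • (conj ∘ ψ))) := by
    ext ζ
    have hre := Complex.re_eq_add_conj (herglotzRieszKernel 0 z ζ)
    simp [poissonKernel_eq_re_herglotzRieszKernel, hre]
    ring
  rw [poissonIntegral_eq_circleAverage, hsplit, Real.circleAverage_smul,
    Real.circleAverage_add hint (circleIntegrable_clm_comp _ hint_conj), hconj]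
  simp only [herglotzTransform, smul_eq_mul, mul_add, ContinuousLinearEquiv.coe_coe,
    Complex.conjCLE_apply, div_eq_inv_mul, map_mul, map_inv₀, map_ofNat]

lemma differentiableAt_poissonIntegral {ψ : ℂ → ℂ} (hψ : CircleIntegrable ψ 0 1) {z : ℂ}
    (hz : z ∈ ball (0 : ℂ) 1) : DifferentiableAt ℝ (poissonIntegral ψ) z := by
  have hz_nhds := isOpen_ball.mem_nhds hz
  have hh := ((differentiableOn_herglotzTransform hψ).div_const 2).differentiableAt hz_nhds
  have hk := ((differentiableOn_herglotzTransform
    (circleIntegrable_conj_comp hψ)).div_const 2).differentiableAt hz_nhds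
  have hsum := (hasFDerivAt_add_conj hh.hasDerivAt hk.hasDerivAt).differentiableAt
  refine hsum.congr_of_eventuallyEq ?_
  filter_upwards [hz_nhds] with w hw using poissonIntegral_eq_herglotzTransform_add_conj hψ hw

lemma norm_fderiv_poissonIntegral_le {ψ : ℂ → ℂ} {M : ℝ} (hψ : CircleIntegrable ψ 0 1)
    (hM : ∀ w ∈ ball (0 : ℂ) 1, ‖poissonIntegral ψ w‖ ≤ M) {z : ℂ} (hz : z ∈ ball (0 : ℂ) 1) :
    ‖fderiv ℝ (poissonIntegral ψ) z‖ ≤ 4 * M / Real.pi * (1 / (1 - ‖z‖ ^ 2)) := by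
  have hP : EqOn (poissonIntegral ψ) _ (ball 0 1) := fun w hw =>
    poissonIntegral_eq_herglotzTransform_add_conj hψ hw
  rw [(hP.eventuallyEq_of_mem (isOpen_ball.mem_nhds hz)).fderiv_eq]
  refine norm_fderiv_add_conj_le ((differentiableOn_herglotzTransform hψ).div_const 2)
    ((differentiableOn_herglotzTransform (circleIntegrable_conj_comp hψ)).div_const 2)
    (fun w hw => ?_) hz
  rw [← poissonIntegral_eq_herglotzTransform_add_conj hψ hw]
  exact hM w hw

/-! ### Differentiation under a weakly singular integral -/

-- The truncations `min ‖F i‖ |A|` have the common bound `|A|`, and truncating loses at most `B i`;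
-- no common integrable bound of the `B i` is needed.
lemma tendsto_integral_zero_of_norm_le_add {α ι E : Type*} [MeasurableSpace α] {ν : Measure α}
    [NormedAddCommGroup E] [NormedSpace ℝ E] {l : Filter ι} [l.IsCountablyGenerated]
    {F : ι → α → E} {A : α → ℝ} {B : ι → α → ℝ}
    (hF : ∀ᶠ i in l, AEStronglyMeasurable (F i) ν) (hA : Integrable A ν)
    (hB : ∀ᶠ i in l, Integrable (B i) ν) (hB₀ : ∀ᶠ i in l, 0 ≤ᵐ[ν] B i)
    (hle : ∀ᶠ i in l, ∀ᵐ a ∂ν, ‖F i a‖ ≤ A a + B i a)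
    (hB_lim : Tendsto (fun i => ∫ a, B i a ∂ν) l (𝓝 0))
    (hF_lim : ∀ᵐ a ∂ν, Tendsto (fun i => F i a) l (𝓝 0)) :
    Tendsto (fun i => ∫ a, F i a ∂ν) l (𝓝 0) := by
  have htrunc : ∀ᶠ i in l, AEStronglyMeasurable (fun a => min ‖F i a‖ |A a|) ν := by
    filter_upwards [hF] with i hi using hi.norm.inf hA.abs.aestronglyMeasurable
  have htrunc_le : ∀ i a, ‖min ‖F i a‖ |A a|‖ ≤ |A a| := fun i a => by
    rw [Real.norm_of_nonneg (le_min (norm_nonneg _) (abs_nonneg _))]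
    exact min_le_right _ _
  have hmin : Tendsto (fun i => ∫ a, min ‖F i a‖ |A a| ∂ν) l (𝓝 0) := by
    simpa using tendsto_integral_filter_of_dominated_convergence _ htrunc
      (Eventually.of_forall fun i => ae_of_all _ (htrunc_le i)) hA.abs (f := fun _ => 0) (by
        filter_upwards [hF_lim] with a ha
        exact squeeze_zero (fun i => le_min (norm_nonneg _) (abs_nonneg _))
          (fun i => min_le_left _ _) (tendsto_zero_iff_norm_tendsto_zero.mp ha))
  refine squeeze_zero_norm' ?_ (by simpa using hmin.add hB_lim)
  filter_upwards [htrunc, hB, hB₀, hle] with i hi hBi hBi₀ hlei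
  have hmin_int : Integrable (fun a => min ‖F i a‖ |A a|) ν :=
    hA.abs.mono' hi (ae_of_all _ (htrunc_le i))
  rw [← integral_add hmin_int hBi]
  refine norm_integral_le_of_norm_le (hmin_int.add hBi) ?_
  filter_upwards [hBi₀, hlei] with a hBa hFa
  have hBa' : 0 ≤ B i a := hBa
  rcases min_choice ‖F i a‖ |A a| with h | h <;> rw [h]
  · linarith
  · linarith [le_abs_self (A a)]

section WeaklySingular

variable {V : Type*} [NormedAddCommGroup V]

lemma preimage_sub_left_ball_zero (c : V) (r : ℝ) : (fun w => c - w) ⁻¹' ball 0 r = ball c r := by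
  ext w
  simp [dist_eq_norm, norm_sub_rev]

lemma norm_sub_inv_le_add_indicator {w z : V} (hwz : w ≠ z) (x : V) :
    ‖x - w‖⁻¹ ≤ 2 * ‖z - w‖⁻¹ + (ball x ‖x - z‖).indicator (fun w => ‖x - w‖⁻¹) w := by
  by_cases hw : w ∈ ball x ‖x - z‖
  · rw [indicator_of_mem hw]
    exact le_add_of_nonneg_left (by positivity)
  · have hle : ‖x - z‖ ≤ ‖x - w‖ := by simpa [dist_eq_norm, norm_sub_rev] using hw
    have htri : ‖z - w‖ ≤ 2 * ‖x - w‖ := by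
      linarith [norm_sub_le_norm_sub_add_norm_sub z x w, norm_sub_rev z x]
    have hpos : 0 < ‖z - w‖ := norm_sub_pos_iff.mpr hwz.symm
    rw [indicator_of_notMem hw, add_zero, ← div_eq_mul_inv, le_div_iff₀ hpos,
      inv_mul_le_iff₀ (by linarith)]
    linarith

lemma norm_differenceQuotient_le {E : Type*} [NormedAddCommGroup E] [NormedSpace ℝ V]
    [NormedSpace ℝ E] {w x z : V} {a b : E} {L : V →L[ℝ] E} {C : ℝ} (hC : 0 ≤ C) (hwz : w ≠ z)
    (hab : ‖a - b‖ ≤ C * ‖x - z‖ * (‖x - w‖⁻¹ + ‖z - w‖⁻¹)) :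
    ‖x - z‖⁻¹ * ‖a - b - L (x - z)‖ ≤ (3 * C * ‖z - w‖⁻¹ + ‖L‖) +
      C * (ball x ‖x - z‖).indicator (fun w => ‖x - w‖⁻¹) w := by
  rcases eq_or_ne x z with rfl | hxz
  · simp only [sub_self, norm_zero, inv_zero, zero_mul, ball_zero, indicator_empty, mul_zero,
      add_zero]
    positivity
  have hpos : 0 < ‖x - z‖ := norm_sub_pos_iff.mpr hxz
  rw [inv_mul_le_iff₀ hpos]
  calc ‖a - b - L (x - z)‖ ≤ C * ‖x - z‖ * (‖x - w‖⁻¹ + ‖z - w‖⁻¹) + ‖L‖ * ‖x - z‖ :=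
        (norm_sub_le _ _).trans (add_le_add hab (L.le_opNorm _))
    _ ≤ C * ‖x - z‖ * (2 * ‖z - w‖⁻¹ + (ball x ‖x - z‖).indicator (fun w => ‖x - w‖⁻¹) w
          + ‖z - w‖⁻¹) + ‖L‖ * ‖x - z‖ := by
        gcongr
        exact norm_sub_inv_le_add_indicator hwz x
    _ = _ := by ring

variable [NormedSpace ℝ V] [FiniteDimensional ℝ V] [MeasurableSpace V] [BorelSpace V]
  {ν : Measure V} [ν.IsAddHaarMeasure]

lemma integrableOn_ball_norm_inv (hV : 1 < Module.finrank ℝ V) (r : ℝ) :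
    IntegrableOn (fun w : V => ‖w‖⁻¹) (ball 0 r) ν :=
  integrableOn_ball_of_norm_le_rpow hV.le (C := 1) (α := 1) (by exact_mod_cast hV)
    (ae_of_all _ fun w => by simp [Real.rpow_neg_one])
    (measurable_norm.inv).aestronglyMeasurable

lemma integrableOn_ball_norm_sub_inv (hV : 1 < Module.finrank ℝ V) (c : V) (r : ℝ) :
    IntegrableOn (fun w => ‖c - w‖⁻¹) (ball c r) ν := by
  rw [← preimage_sub_left_ball_zero]
  exact ((Measure.measurePreserving_sub_left ν c).integrableOn_comp_preimage
    (MeasurableEquiv.subLeft c).measurableEmbedding).mpr (integrableOn_ball_norm_inv hV r)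

lemma integrableOn_norm_sub_inv (hV : 1 < Module.finrank ℝ V) {s : Set V}
    (hs : Bornology.IsBounded s) (c : V) : IntegrableOn (fun w => ‖c - w‖⁻¹) s ν :=
  let ⟨r, hr⟩ := hs.subset_ball c
  (integrableOn_ball_norm_sub_inv hV c r).mono_set hr

lemma setIntegral_ball_norm_sub_inv (c : V) (r : ℝ) :
    ∫ w in ball c r, ‖c - w‖⁻¹ ∂ν = ∫ w in ball (0 : V) r, ‖w‖⁻¹ ∂ν := by
  rw [← preimage_sub_left_ball_zero]
  exact (Measure.measurePreserving_sub_left ν c).setIntegral_preimage_emb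
    (MeasurableEquiv.subLeft c).measurableEmbedding (fun w => ‖w‖⁻¹) (ball 0 r)

lemma tendsto_setIntegral_ball_norm_inv (hV : 1 < Module.finrank ℝ V) :
    Tendsto (fun r => ∫ w in ball (0 : V) r, ‖w‖⁻¹ ∂ν) (𝓝 0) (𝓝 0) := by
  have : Nontrivial V := Module.nontrivial_of_finrank_pos (R := ℝ) (zero_lt_one.trans hV)
  have hvol : Tendsto (fun r => ν (ball (0 : V) |r|)) (𝓝 0) (𝓝 0) := by
    have hpow : Tendsto (fun r : ℝ => ENNReal.ofReal (|r| ^ Module.finrank ℝ V)) (𝓝 0) (𝓝 0) := by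
      have hcont : Continuous fun r : ℝ => ENNReal.ofReal (|r| ^ Module.finrank ℝ V) :=
        ENNReal.continuous_ofReal.comp (by fun_prop)
      simpa [(zero_lt_one.trans hV).ne'] using hcont.tendsto 0
    simp only [Measure.addHaar_ball ν (0 : V) (abs_nonneg _)]
    simpa only [zero_mul] using ENNReal.Tendsto.mul_const hpow (Or.inr measure_ball_lt_top.ne)
  have hlim := (integrableOn_ball_norm_inv (ν := ν) hV 1).integrable.tendsto_setIntegral_nhds_zero
    (s := fun r : ℝ => ball (0 : V) r) <|
      tendsto_of_tendsto_of_tendsto_of_le_of_le tendsto_const_nhds hvol (fun _ => bot_le)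
        fun r => (Measure.restrict_apply_le _ _).trans
          (measure_mono (ball_subset_ball (le_abs_self r)))
  refine hlim.congr' ?_
  filter_upwards [Iio_mem_nhds one_pos] with r hr
  rw [Measure.restrict_restrict measurableSet_ball,
    inter_eq_left.mpr (ball_subset_ball (le_of_lt hr))]

lemma tendsto_setIntegral_indicator_ball_norm_sub_inv (hV : 1 < Module.finrank ℝ V) {s : Set V}
    (z : V) : Tendsto (fun x => ∫ w in s,
      (ball x ‖x - z‖).indicator (fun w => ‖x - w‖⁻¹) w ∂ν) (𝓝 z) (𝓝 0) := by
  have hdist : Tendsto (fun x => ‖x - z‖) (𝓝 z) (𝓝 0) := tendsto_norm_sub_self z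
  have hnonneg : ∀ x, 0 ≤ (ball x ‖x - z‖).indicator (fun w => ‖x - w‖⁻¹) := fun x =>
    indicator_nonneg fun _ _ => by positivity
  refine squeeze_zero (fun x => integral_nonneg (hnonneg x)) (fun x => ?_)
    ((tendsto_setIntegral_ball_norm_inv (ν := ν) hV).comp hdist)
  simp only [Function.comp_apply]
  rw [← setIntegral_ball_norm_sub_inv x, ← integral_indicator measurableSet_ball]
  refine setIntegral_le_integral ?_ (ae_of_all _ (hnonneg x))
  exact (integrable_indicator_iff measurableSet_ball).mpr (integrableOn_ball_norm_sub_inv hV x _)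

theorem hasFDerivAt_integral_of_weaklySingular {E : Type*} [NormedAddCommGroup E]
    [NormedSpace ℝ E] [CompleteSpace E] (hV : 1 < Module.finrank ℝ V) {s : Set V}
    (hs : Bornology.IsBounded s) {F : V → V → E} {F' : V → V →L[ℝ] E} {z : V} {C : ℝ} (hC : 0 ≤ C)
    (hF : ∀ᶠ x in 𝓝 z, IntegrableOn (F x) s ν) (hF' : IntegrableOn F' s ν)
    (hlip : ∀ᶠ x in 𝓝 z, ∀ᵐ w ∂ν.restrict s,
      ‖F x w - F z w‖ ≤ C * ‖x - z‖ * (‖x - w‖⁻¹ + ‖z - w‖⁻¹))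
    (hdiff : ∀ᵐ w ∂ν.restrict s, HasFDerivAt (fun x => F x w) (F' w) z) :
    HasFDerivAt (fun x => ∫ w in s, F x w ∂ν) (∫ w in s, F' w ∂ν) z := by
  have : Nontrivial V := Module.nontrivial_of_finrank_pos (R := ℝ) (zero_lt_one.trans hV)
  have hsub : ∀ᶠ x in 𝓝 z, IntegrableOn (fun w => F x w - F z w - F' w (x - z)) s ν :=
    hF.mono fun x hx => (hx.sub hF.self_of_nhds).sub (hF'.apply_continuousLinearMap _)
  have hquot : Tendsto (fun x => ∫ w in s, ‖x - z‖⁻¹ * ‖F x w - F z w - F' w (x - z)‖ ∂ν)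
      (𝓝 z) (𝓝 0) := by
    refine tendsto_integral_zero_of_norm_le_add (A := fun w => 3 * C * ‖z - w‖⁻¹ + ‖F' w‖)
      (B := fun x w => C * (ball x ‖x - z‖).indicator (fun w => ‖x - w‖⁻¹) w)
      (hsub.mono fun x hx => (hx.norm.const_mul _).aestronglyMeasurable)
      (((integrableOn_norm_sub_inv hV hs z).const_mul _).add hF'.norm)
      (Eventually.of_forall fun x => ?_) (Eventually.of_forall fun x => ae_of_all _ fun w =>
        mul_nonneg hC (indicator_nonneg (fun _ _ => by positivity) w)) ?_ ?_ ?_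
    · exact ((integrableOn_norm_sub_inv hV hs x).integrable.indicator
        measurableSet_ball).const_mul C
    · filter_upwards [hlip] with x hx
      filter_upwards [hx, ae_restrict_of_ae (Measure.ae_ne ν z)] with w hw hwz
      rw [Real.norm_of_nonneg (by positivity)]
      exact norm_differenceQuotient_le hC hwz hw
    · simpa only [integral_const_mul, mul_zero] using
        (tendsto_setIntegral_indicator_ball_norm_sub_inv hV z).const_mul C
    · filter_upwards [hdiff] with w hw using hasFDerivAt_iff_tendsto.mp hw
  refine hasFDerivAt_iff_tendsto.mpr (squeeze_zero' (Eventually.of_forall fun x => by positivity)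
    ?_ hquot)
  filter_upwards [hF] with x hx
  rw [integral_const_mul, ContinuousLinearMap.integral_apply hF',
    ← integral_sub hx hF.self_of_nhds,
    ← integral_sub (f := fun w => F x w - F z w) (hx.sub hF.self_of_nhds)
      (hF'.apply_continuousLinearMap _)]
  gcongr
  exact norm_integral_le_integral_norm _

end WeaklySingular

section PolarCoordinates

variable {E : Type*} [NormedAddCommGroup E] [NormedSpace ℝ E] {f : ℂ → E}

lemma polarCoord_symm_eq_circleMap (p : ℝ × ℝ) :
    Complex.polarCoord.symm p = circleMap 0 p.1 p.2 := by
  rw [Complex.polarCoord_symm_apply, circleMap_zero, Complex.exp_mul_I, Complex.ofReal_cos,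
    Complex.ofReal_sin]

lemma integrableOn_smul_circleMap (hf : Integrable f) :
    IntegrableOn (fun p : ℝ × ℝ => p.1 • f (circleMap 0 p.1 p.2))
      (Ioi 0 ×ˢ Ioo (-Real.pi) Real.pi) := by
  have hf' : Integrable (f ∘ Complex.measurableEquivRealProd.symm) :=
    (Complex.volume_preserving_equiv_real_prod.symm _).integrable_comp_of_integrable hf
  have hpolar := (integrableOn_image_iff_integrableOn_abs_det_fderiv_smul volume
    polarCoord.open_target.measurableSet
    (fun p _ => (hasFDerivAt_polarCoord_symm p).hasFDerivWithinAt) polarCoord.symm.injOn _).mp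
    (hf'.integrableOn (s := polarCoord.symm '' polarCoord.target))
  refine hpolar.congr_fun (fun p hp => ?_) polarCoord.open_target.measurableSet
  have hp₀ : 0 < p.1 := hp.1
  simp only [det_fderivPolarCoordSymm, abs_of_pos hp₀, Function.comp_apply,
    Complex.measurableEquivRealProd_symm_polarCoord_symm_apply, polarCoord_symm_eq_circleMap]

lemma setIntegral_Ioo_circleMap (r : ℝ) :
    ∫ θ in Ioo (-Real.pi) Real.pi, f (circleMap 0 r θ) =
      (2 * Real.pi) • Real.circleAverage f 0 r := by
  have hpi := Real.pi_pos
  rw [Real.circleAverage_eq_integral_add (-Real.pi), smul_inv_smul₀ (by positivity),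
    ← integral_Ioc_eq_integral_Ioo, ← intervalIntegral.integral_of_le (by linarith),
    intervalIntegral.integral_comp_add_right (fun θ => f (circleMap 0 r θ))]
  congr 1 <;> ring

lemma integral_eq_integral_circleAverage (hf : Integrable f) :
    ∫ w, f w = (2 * Real.pi) • ∫ r in Ioi (0 : ℝ), r • Real.circleAverage f 0 r := by
  have hint := integrableOn_smul_circleMap hf
  simp only [← Complex.integral_comp_polarCoord_symm, polarCoord_symm_eq_circleMap]
  rw [polarCoord_target, Measure.volume_eq_prod, setIntegral_prod _ hint, ← integral_smul]
  simp only [integral_smul, setIntegral_Ioo_circleMap, smul_comm (2 * Real.pi)]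

lemma setIntegral_ball_eq_integral_circleAverage {R : ℝ} (hR : 0 ≤ R)
    (hf : IntegrableOn f (ball 0 R)) :
    ∫ w in ball 0 R, f w = (2 * Real.pi) • ∫ r in (0 : ℝ)..R, r • Real.circleAverage f 0 r := by
  have hcircle : ∀ r ∈ Ioi (0 : ℝ),
      r • Real.circleAverage ((ball 0 R).indicator f) 0 r =
        (Ioo 0 R).indicator (fun r => r • Real.circleAverage f 0 r) r := by
    intro r hr
    have hr₀ : 0 < r := hr
    by_cases hrR : r < R
    · rw [indicator_of_mem (show r ∈ Ioo 0 R from ⟨hr, hrR⟩)]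
      congr 1
      refine Real.circleAverage_congr_sphere fun w hw => indicator_of_mem ?_ f
      rw [mem_ball_zero_iff, mem_sphere_zero_iff_norm.mp hw, abs_of_pos hr₀]
      exact hrR
    · rw [indicator_of_notMem fun h => hrR h.2,
        Real.circleAverage_congr_sphere (f₂ := fun _ => 0) fun w hw => indicator_of_notMem ?_ f]
      · simp [Real.circleAverage_def]
      · rw [mem_ball_zero_iff, mem_sphere_zero_iff_norm.mp hw, abs_of_pos hr₀]
        exact hrR
  rw [← integral_indicator measurableSet_ball,
    integral_eq_integral_circleAverage ((integrable_indicator_iff measurableSet_ball).mpr hf),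
    setIntegral_congr_fun measurableSet_Ioi hcircle, setIntegral_indicator measurableSet_Ioo,
    inter_eq_right.mpr Ioo_subset_Ioi_self, intervalIntegral.integral_of_le hR,
    integral_Ioc_eq_integral_Ioo]

end PolarCoordinates

/-! ### The gradient of the Green function and its `L¹` norm -/

lemma norm_one_sub_conj_mul_of_norm_eq_one {c ζ : ℂ} (hζ : ‖ζ‖ = 1) :
    ‖1 - conj c * ζ‖ = ‖ζ - c‖ := by
  have hsq : ‖1 - conj c * ζ‖ ^ 2 = ‖c - ζ‖ ^ 2 := by
    linear_combination norm_one_sub_conj_mul_sq_sub c ζ - (1 - ‖c‖ ^ 2) * (‖ζ‖ + 1) * hζ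
  rw [norm_sub_rev ζ c, ← sq_eq_sq₀ (norm_nonneg _) (norm_nonneg _), hsq]

lemma poissonKernel_of_norm_eq_one {c ζ : ℂ} (hζ : ‖ζ‖ = 1) :
    poissonKernel 0 c ζ = (1 - ‖c‖ ^ 2) / ‖1 - conj c * ζ‖ ^ 2 := by
  rw [poissonKernel_def, sub_zero, sub_zero, hζ, norm_one_sub_conj_mul_of_norm_eq_one hζ, one_pow]

lemma re_one_add_div_one_sub (u : ℂ) : ((1 + u) / (1 - u)).re = (1 - ‖u‖ ^ 2) / ‖1 - u‖ ^ 2 := by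
  rw [Complex.div_re, ← add_div, Complex.sq_norm, Complex.sq_norm, Complex.normSq_apply u]
  simp only [Complex.add_re, Complex.sub_re, Complex.add_im, Complex.sub_im, Complex.one_re,
    Complex.one_im]
  ring

/- On the circle the Poisson kernel of `c` is itself the real part of the holomorphic function
`(1 + c̄ ζ) / (1 - c̄ ζ)`, so its second moment is the value of that function at `c`. -/
lemma circleAverage_poissonKernel_sq {c : ℂ} (hc : ‖c‖ < 1) :
    Real.circleAverage (fun ζ => poissonKernel 0 c ζ ^ 2) 0 1 = (1 + ‖c‖ ^ 2) / (1 - ‖c‖ ^ 2) := by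
  set h : ℂ → ℂ := fun ζ => (1 + conj c * ζ) / (1 - conj c * ζ) with h_def
  have hc' : c ∈ ball (0 : ℂ) 1 := mem_ball_zero_iff.mpr hc
  have hh : DifferentiableOn ℂ h (closedBall 0 1) := fun ζ hζ => by
    have hden := one_sub_conj_mul_ne_zero hc (mem_closedBall_zero_iff.mp hζ)
    exact DifferentiableAt.differentiableWithinAt (by fun_prop (disch := exact hden))
  have hmean : Real.circleAverage (poissonKernel 0 c • h) 0 1 = h c :=
    DiffContOnCl.circleAverage_poissonKernel_smul
      (hh.mono (closure_ball (0 : ℂ) one_ne_zero).subset).diffContOnCl hc'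
  have hint : CircleIntegrable (poissonKernel 0 c • h) 0 1 :=
    ((continuousOn_poissonKernel_sphere hc').smul
      (hh.continuousOn.mono (by rw [abs_one]; exact sphere_subset_closedBall))).circleIntegrable'
  have hre : EqOn (fun ζ => poissonKernel 0 c ζ ^ 2) (Complex.reCLM ∘ (poissonKernel 0 c • h))
      (sphere 0 |1|) := fun ζ hζ => by
    have hζ₁ : ‖ζ‖ = 1 := by simpa using hζ
    have hre_h : (h ζ).re = poissonKernel 0 c ζ := by
      rw [h_def, re_one_add_div_one_sub, poissonKernel_of_norm_eq_one hζ₁, norm_mul,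
        Complex.norm_conj, hζ₁, mul_one]
    simp [hre_h, sq]
  have hval : h c = (((1 + ‖c‖ ^ 2) / (1 - ‖c‖ ^ 2) : ℝ) : ℂ) := by
    simp only [h_def, Complex.conj_mul']
    push_cast
    rfl
  rw [Real.circleAverage_congr_sphere hre, Complex.reCLM.circleAverage_comp_comm hint, hmean, hval]
  exact Complex.ofReal_re _

lemma circleAverage_norm_one_sub_conj_mul_pow_four_inv {z : ℂ} {r : ℝ} (hr : 0 ≤ r)
    (hrz : ‖z‖ * r < 1) :
    Real.circleAverage (fun w => (‖1 - conj z * w‖ ^ 4)⁻¹) 0 r =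
      (1 + ‖z‖ ^ 2 * r ^ 2) / (1 - ‖z‖ ^ 2 * r ^ 2) ^ 3 := by
  have hnorm : ‖r * z‖ = ‖z‖ * r := by rw [norm_mul, Complex.norm_of_nonneg hr, mul_comm]
  have hc : ‖r * z‖ < 1 := hnorm.trans_lt hrz
  have hpos := one_sub_norm_sq_pos hc
  have hkernel : EqOn (fun ζ : ℂ => (‖1 - conj z * (r * ζ + 0)‖ ^ 4)⁻¹)
      (fun ζ => ((1 - ‖r * z‖ ^ 2) ^ 2)⁻¹ • poissonKernel 0 (r * z) ζ ^ 2) (sphere 0 |1|) := by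
    intro ζ hζ
    have hζ₁ : ‖ζ‖ = 1 := by simpa using hζ
    have hconj : conj (r * z) * ζ = conj z * (r * ζ) := by
      rw [map_mul, Complex.conj_ofReal]
      ring
    simp only [poissonKernel_of_norm_eq_one hζ₁, hconj, add_zero, smul_eq_mul, div_pow, ← pow_mul]
    rw [inv_mul_eq_div, div_div_cancel_left' (pow_ne_zero 2 hpos.ne')]
  rw [Real.circleAverage_eq_circleAverage_zero_one, Real.circleAverage_congr_sphere hkernel,
    Real.circleAverage_fun_smul, circleAverage_poissonKernel_sq hc, ← mul_pow, ← hnorm, smul_eq_mul]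
  field_simp

/-- The gradient in `z` of the Green function `G(z, w)` of the unit disk, see
`hasGradientAt_green`; as a complex number it is `2 ∂G/∂z̄`. -/
def greenGradient (z w : ℂ) : ℂ :=
  -((1 - ‖w‖ ^ 2 : ℝ) : ℂ) / ((1 - conj z * w) * conj (z - w))

lemma norm_greenGradient {w : ℂ} (z : ℂ) (hw : ‖w‖ < 1) :
    ‖greenGradient z w‖ = (1 - ‖w‖ ^ 2) / (‖1 - conj z * w‖ * ‖z - w‖) := by
  rw [greenGradient, norm_div, norm_neg, norm_mul, Complex.norm_conj,
    Complex.norm_of_nonneg (one_sub_norm_sq_pos hw).le]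

lemma norm_greenGradient_le {z w : ℂ} (hz : ‖z‖ < 1) (hw : ‖w‖ < 1) :
    ‖greenGradient z w‖ ≤ 2 * ‖z - w‖⁻¹ := by
  have hden : 0 < ‖1 - conj z * w‖ := norm_pos_iff.mpr (one_sub_conj_mul_ne_zero hz hw.le)
  have hle : 1 - ‖w‖ ≤ ‖1 - conj z * w‖ :=
    calc 1 - ‖w‖ ≤ 1 - ‖z‖ * ‖w‖ := by nlinarith [norm_nonneg w]
      _ ≤ ‖1 - conj z * w‖ := by simpa using norm_sub_norm_le 1 (conj z * w)
  rw [norm_greenGradient z hw, ← div_div, div_eq_mul_inv _ ‖z - w‖]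
  gcongr
  rw [div_le_iff₀ hden]
  nlinarith [norm_nonneg w]

lemma measurable_greenGradient (z : ℂ) : Measurable (greenGradient z) := by
  have hconj : Measurable fun w : ℂ => conj (z - w) := by fun_prop
  unfold greenGradient
  fun_prop

lemma one_lt_finrank_complex : 1 < Module.finrank ℝ ℂ :=
  Complex.finrank_real_complex ▸ one_lt_two

lemma integrableOn_greenGradient {z : ℂ} (hz : ‖z‖ < 1) :
    IntegrableOn (greenGradient z) (ball 0 1) := by
  refine ((integrableOn_norm_sub_inv one_lt_finrank_complex isBounded_ball z).const_mul 2).mono'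
    (measurable_greenGradient z).aestronglyMeasurable ?_
  filter_upwards [self_mem_ae_restrict measurableSet_ball] with w hw
  exact norm_greenGradient_le hz (mem_ball_zero_iff.mp hw)

lemma norm_greenGradient_mobius {z a : ℂ} (hz : ‖z‖ < 1) (ha : ‖a‖ < 1) :
    ‖greenGradient z (mobius z a)‖ = (1 - ‖a‖ ^ 2) / (‖a‖ * (1 - ‖z‖ ^ 2)) := by
  have hden : ‖1 - conj z * a‖ ≠ 0 := norm_ne_zero_iff.mpr (one_sub_conj_mul_ne_zero hz ha.le)
  have hz₀ := one_sub_norm_sq_pos hz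
  have hmob := mem_ball_zero_iff.mp (mobius_mem_ball hz (mem_ball_zero_iff.mpr ha))
  rw [norm_greenGradient z hmob, one_sub_norm_mobius_sq hz ha, one_sub_conj_mul_mobius hz ha,
    sub_mobius hz ha]
  simp only [norm_div, norm_mul, Complex.norm_of_nonneg hz₀.le]
  rcases eq_or_ne ‖a‖ 0 with ha₀ | ha₀
  · simp [ha₀]
  · field_simp

lemma det_toSpanSingleton_restrictScalars (c : ℂ) :
    ((ContinuousLinearMap.toSpanSingleton ℂ c).restrictScalars ℝ).det = ‖c‖ ^ 2 := by
  simp [ContinuousLinearMap.det, LinearMap.det_restrictScalars, Algebra.norm_complex_eq,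
    Complex.normSq_eq_norm_sq]

lemma setIntegral_image_eq_setIntegral_norm_deriv_sq_smul {E : Type*} [NormedAddCommGroup E]
    [NormedSpace ℝ E] {s : Set ℂ} (hs : MeasurableSet s) {φ φ' : ℂ → ℂ}
    (hφ : ∀ w ∈ s, HasDerivAt φ (φ' w) w) (hinj : InjOn φ s) (F : ℂ → E) :
    ∫ w in φ '' s, F w = ∫ a in s, ‖φ' a‖ ^ 2 • F (φ a) := by
  rw [integral_image_eq_integral_abs_det_fderiv_smul volume hs
    (fun w hw => ((hφ w hw).hasFDerivAt.restrictScalars ℝ).hasFDerivWithinAt) hinj]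
  simp only [det_toSpanSingleton_restrictScalars, abs_of_nonneg (sq_nonneg ‖_‖)]

lemma integrableOn_image_iff_integrableOn_norm_deriv_sq_smul {E : Type*} [NormedAddCommGroup E]
    [NormedSpace ℝ E] {s : Set ℂ} (hs : MeasurableSet s) {φ φ' : ℂ → ℂ}
    (hφ : ∀ w ∈ s, HasDerivAt φ (φ' w) w) (hinj : InjOn φ s) (F : ℂ → E) :
    IntegrableOn F (φ '' s) ↔ IntegrableOn (fun a => ‖φ' a‖ ^ 2 • F (φ a)) s := by
  rw [integrableOn_image_iff_integrableOn_abs_det_fderiv_smul volume hs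
    (fun w hw => ((hφ w hw).hasFDerivAt.restrictScalars ℝ).hasFDerivWithinAt) hinj]
  simp only [det_toSpanSingleton_restrictScalars, abs_of_nonneg (sq_nonneg ‖_‖)]

/-- A primitive, in `x`, of the radial density `(1 - x²)(1 + r²x²) / (1 - r²x²)³` to which polar
coordinates reduce the integral of `‖greenGradient z ·‖`, `r = ‖z‖`. -/
def radialPrimitive (r x : ℝ) : ℝ :=
  ((1 + 3 * r ^ 2) / (4 * r ^ 2) * x - (3 + r ^ 2) / 4 * x ^ 3) / (1 - r ^ 2 * x ^ 2) ^ 2 -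
    (1 - r ^ 2) / (8 * r ^ 3) * (Real.log (1 + r * x) - Real.log (1 - r * x))

lemma hasDerivAt_radialPrimitive {r x : ℝ} (hr : r ≠ 0) (hadd : 1 + r * x ≠ 0)
    (hsub : 1 - r * x ≠ 0) :
    HasDerivAt (radialPrimitive r)
      ((1 - x ^ 2) * (1 + r ^ 2 * x ^ 2) / (1 - r ^ 2 * x ^ 2) ^ 3) x := by
  have hfactor : 1 - r ^ 2 * x ^ 2 = (1 + r * x) * (1 - r * x) := by ring
  have hne : 1 - r ^ 2 * x ^ 2 ≠ 0 := hfactor ▸ mul_ne_zero hadd hsub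
  have hx := hasDerivAt_id' x
  have hnum := (hx.const_mul ((1 + 3 * r ^ 2) / (4 * r ^ 2))).sub
    ((hx.pow 3).const_mul ((3 + r ^ 2) / 4))
  have hden := (((hx.pow 2).const_mul (r ^ 2)).const_sub 1).pow 2
  have hlog := (((hx.const_mul r).const_add 1).log hadd).sub
    (((hx.const_mul r).const_sub 1).log hsub)
  convert! (hnum.div hden (pow_ne_zero 2 hne)).sub
    (hlog.const_mul ((1 - r ^ 2) / (8 * r ^ 3))) using 1
  simp only [Pi.pow_apply, Pi.sub_apply, hfactor]
  clear hnum hden hlog hfactor hne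
  generalize hA : 1 + r * x = A at hadd ⊢
  generalize hB : 1 - r * x = B at hsub ⊢
  field_simp
  push_cast
  rw [← hA, ← hB]
  ring

lemma integral_radial_density {r : ℝ} (hr₀ : 0 < r) (hr₁ : r < 1) :
    (1 - r ^ 2) * ∫ x in (0 : ℝ)..1,
      (1 - x ^ 2) * (1 + r ^ 2 * x ^ 2) / (1 - r ^ 2 * x ^ 2) ^ 3 = 2 * mu 1 r := by
  have hlt : ∀ x ∈ uIcc (0 : ℝ) 1, 0 ≤ r * x ∧ r * x < 1 := fun x hx => by
    rw [uIcc_of_le zero_le_one] at hx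
    exact ⟨mul_nonneg hr₀.le hx.1, by nlinarith [hx.2]⟩
  have hcont : ContinuousOn
      (fun x => (1 - x ^ 2) * (1 + r ^ 2 * x ^ 2) / (1 - r ^ 2 * x ^ 2) ^ 3) (uIcc 0 1) := by
    refine ContinuousOn.div (by fun_prop) (by fun_prop) fun x hx => pow_ne_zero 3 ?_
    nlinarith [hlt x hx]
  have hsub₀ : 1 - r ≠ 0 := by linarith
  have hadd₀ : 1 + r ≠ 0 := by linarith
  rw [intervalIntegral.integral_eq_sub_of_hasDerivAt (fun x hx =>
    hasDerivAt_radialPrimitive hr₀.ne' (by linarith [hlt x hx]) (by linarith [hlt x hx]))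
      hcont.intervalIntegrable, mu, Real.log_div hadd₀ hsub₀]
  simp only [radialPrimitive, mul_one, mul_zero, add_zero, sub_zero, Real.log_one, one_pow,
    show 1 - r ^ 2 = (1 + r) * (1 - r) by ring]
  field_simp
  ring

lemma norm_deriv_mobius_sq_mul_norm_greenGradient {z a : ℂ} (hz : ‖z‖ < 1) (ha : ‖a‖ < 1) :
    ‖-((1 - ‖z‖ ^ 2 : ℝ) : ℂ) / (1 - conj z * a) ^ 2‖ ^ 2 • ‖greenGradient z (mobius z a)‖ =
      ((1 - ‖z‖ ^ 2) * (1 - ‖a‖ ^ 2) / ‖a‖) • (‖1 - conj z * a‖ ^ 4)⁻¹ := by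
  have hz₀ := one_sub_norm_sq_pos hz
  have hden : ‖1 - conj z * a‖ ≠ 0 := norm_ne_zero_iff.mpr (one_sub_conj_mul_ne_zero hz ha.le)
  rw [norm_greenGradient_mobius hz ha, norm_div, norm_neg, norm_pow,
    Complex.norm_of_nonneg hz₀.le, smul_eq_mul, smul_eq_mul]
  rcases eq_or_ne ‖a‖ 0 with ha₀ | ha₀
  · simp [ha₀]
  · field_simp

lemma smul_circleAverage_norm_greenGradient_mobius {z : ℂ} {r : ℝ} (hz : ‖z‖ < 1)
    (hr₀ : 0 < r) (hr₁ : r < 1) :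
    r • Real.circleAverage (fun a => ‖-((1 - ‖z‖ ^ 2 : ℝ) : ℂ) / (1 - conj z * a) ^ 2‖ ^ 2 •
        ‖greenGradient z (mobius z a)‖) 0 r =
      (1 - ‖z‖ ^ 2) *
        ((1 - r ^ 2) * (1 + ‖z‖ ^ 2 * r ^ 2) / (1 - ‖z‖ ^ 2 * r ^ 2) ^ 3) := by
  have hcircle : EqOn (fun a => ‖-((1 - ‖z‖ ^ 2 : ℝ) : ℂ) / (1 - conj z * a) ^ 2‖ ^ 2 •
      ‖greenGradient z (mobius z a)‖)
      (fun a => ((1 - ‖z‖ ^ 2) * (1 - r ^ 2) / r) • (‖1 - conj z * a‖ ^ 4)⁻¹)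
      (sphere 0 |r|) := fun a ha => by
    have har : ‖a‖ = r := by rw [mem_sphere_zero_iff_norm.mp ha, abs_of_pos hr₀]
    simp only [norm_deriv_mobius_sq_mul_norm_greenGradient hz (har.trans_lt hr₁), har]
  rw [Real.circleAverage_congr_sphere hcircle, Real.circleAverage_fun_smul,
    circleAverage_norm_one_sub_conj_mul_pow_four_inv hr₀.le (by nlinarith [norm_nonneg z])]
  simp only [smul_eq_mul]
  field_simp

theorem integral_norm_greenGradient {z : ℂ} (hz : ‖z‖ < 1) (hz₀ : z ≠ 0) :
    ∫ w in ball 0 1, ‖greenGradient z w‖ = 4 * Real.pi * mu 1 ‖z‖ := by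
  have hmob := bijOn_mobius hz
  have hderiv : ∀ a ∈ ball (0 : ℂ) 1, HasDerivAt (mobius z)
      (-((1 - ‖z‖ ^ 2 : ℝ) : ℂ) / (1 - conj z * a) ^ 2) a := fun a ha =>
    hasDerivAt_mobius hz (mem_ball_zero_iff.mp ha)
  have hint : IntegrableOn (fun w => ‖greenGradient z w‖) (mobius z '' ball 0 1) :=
    hmob.image_eq.symm ▸ (integrableOn_greenGradient hz).norm
  rw [integrableOn_image_iff_integrableOn_norm_deriv_sq_smul measurableSet_ball hderiv
    hmob.injOn] at hint
  calc ∫ w in ball 0 1, ‖greenGradient z w‖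
      = ∫ w in mobius z '' ball 0 1, ‖greenGradient z w‖ := by rw [hmob.image_eq]
    _ = 2 * Real.pi * ∫ r in (0 : ℝ)..1, (1 - ‖z‖ ^ 2) *
          ((1 - r ^ 2) * (1 + ‖z‖ ^ 2 * r ^ 2) / (1 - ‖z‖ ^ 2 * r ^ 2) ^ 3) := by
      rw [setIntegral_image_eq_setIntegral_norm_deriv_sq_smul measurableSet_ball hderiv
        hmob.injOn, setIntegral_ball_eq_integral_circleAverage zero_le_one hint, smul_eq_mul,
        intervalIntegral.integral_of_le zero_le_one, intervalIntegral.integral_of_le zero_le_one,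
        integral_Ioc_eq_integral_Ioo, integral_Ioc_eq_integral_Ioo]
      exact congrArg _ (setIntegral_congr_fun measurableSet_Ioo fun r hr =>
        smul_circleAverage_norm_greenGradient_mobius hz hr.1 hr.2)
    _ = 4 * Real.pi * mu 1 ‖z‖ := by
      rw [intervalIntegral.integral_const_mul,
        integral_radial_density (norm_pos_iff.mpr hz₀) hz]
      ring

/-! ### The Green potential -/

lemma hasGradientAt_log_norm {H : Type*} [NormedAddCommGroup H] [InnerProductSpace ℝ H]
    [CompleteSpace H] {x : H} (hx : x ≠ 0) :
    HasGradientAt (fun x => Real.log ‖x‖) ((‖x‖ ^ 2)⁻¹ • x) x := by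
  have hsq : ‖x‖ ^ 2 ≠ 0 := pow_ne_zero 2 (norm_ne_zero_iff.mpr hx)
  have hlog := ((hasStrictFDerivAt_norm_sq x).hasFDerivAt.log hsq).const_mul (2⁻¹ : ℝ)
  rw [hasGradientAt_iff_hasFDerivAt]
  convert! hlog using 1
  · ext y
    simp
  · ext y
    simp
    ring

lemma hasGradientAt_log_norm_comp {u : ℂ → ℂ} {u' z : ℂ} (hu : HasDerivAt u u' z) (hz : u z ≠ 0) :
    HasGradientAt (fun x => Real.log ‖u x‖) (conj (u' / u z)) z := by
  have hcomp := (hasGradientAt_log_norm hz).hasFDerivAt.comp z (hu.hasFDerivAt.restrictScalars ℝ)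
  have hdiv : u' / u z = ((‖u z‖ ^ 2)⁻¹ : ℝ) * (conj (u z) * u') := by
    push_cast
    rw [← Complex.conj_mul']
    field_simp [(map_ne_zero (starRingEnd ℂ)).mpr hz]
  rw [hasGradientAt_iff_hasFDerivAt]
  convert! hcomp using 1
  ext v
  simp only [InnerProductSpace.toDual_apply_apply, Complex.inner, hdiv]
  simp
  ring

lemma hasGradientAt_green {z w : ℂ} (hz : ‖z‖ < 1) (hw : ‖w‖ < 1) (hzw : z ≠ w) :
    HasGradientAt (fun z => Real.log ‖(1 - z * conj w) / (z - w)‖) (greenGradient z w) z := by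
  have hsub : z - w ≠ 0 := sub_ne_zero.mpr hzw
  have hden : 1 - z * conj w ≠ 0 := mul_comm (conj w) z ▸ one_sub_conj_mul_ne_zero hw hz.le
  have hquot : HasDerivAt (fun z => (1 - z * conj w) / (z - w))
      (-((1 - ‖w‖ ^ 2 : ℝ) : ℂ) / (z - w) ^ 2) z := by
    convert! (((hasDerivAt_id z).mul_const (conj w)).const_sub 1).div
      ((hasDerivAt_id z).sub_const w) hsub using 1
    rw [← one_sub_conj_mul_self]
    simp only [id]
    ring
  convert! hasGradientAt_log_norm_comp hquot (div_ne_zero hden hsub) using 1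
  have hlogDeriv : -((1 - ‖w‖ ^ 2 : ℝ) : ℂ) / (z - w) ^ 2 / ((1 - z * conj w) / (z - w)) =
      -((1 - ‖w‖ ^ 2 : ℝ) : ℂ) / ((1 - z * conj w) * (z - w)) := by
    field_simp
  rw [greenGradient, hlogDeriv]
  simp only [map_div₀, map_neg, map_mul, map_sub, map_one, Complex.conj_conj, Complex.conj_ofReal]

lemma norm_sub_le_norm_one_sub_mul_conj {z w : ℂ} (hz : ‖z‖ < 1) (hw : ‖w‖ < 1) :
    ‖z - w‖ ≤ ‖1 - z * conj w‖ := by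
  rw [mul_comm, norm_sub_rev z, ← sq_le_sq₀ (norm_nonneg _) (norm_nonneg _), ← sub_nonneg,
    norm_one_sub_conj_mul_sq_sub]
  exact (mul_pos (one_sub_norm_sq_pos hw) (one_sub_norm_sq_pos hz)).le

lemma log_sub_log_le {a b : ℝ} (ha : 0 < a) (hb : 0 < b) :
    Real.log a - Real.log b ≤ (a - b) * b⁻¹ := by
  rw [← Real.log_div ha.ne' hb.ne', sub_mul, mul_inv_cancel₀ hb.ne', ← div_eq_mul_inv]
  exact Real.log_le_sub_one_of_pos (div_pos ha hb)

lemma abs_log_sub_log_le {a b : ℝ} (ha : 0 < a) (hb : 0 < b) :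
    |Real.log a - Real.log b| ≤ |a - b| * (a⁻¹ + b⁻¹) := by
  have hab : (a - b) * b⁻¹ ≤ |a - b| * (a⁻¹ + b⁻¹) :=
    mul_le_mul (le_abs_self _) (le_add_of_nonneg_left (by positivity)) (by positivity)
      (abs_nonneg _)
  have hba : (b - a) * a⁻¹ ≤ |a - b| * (a⁻¹ + b⁻¹) :=
    mul_le_mul (abs_sub_comm a b ▸ le_abs_self _) (le_add_of_nonneg_right (by positivity))
      (by positivity) (abs_nonneg _)
  exact abs_sub_le_iff.mpr ⟨(log_sub_log_le ha hb).trans hab, (log_sub_log_le hb ha).trans hba⟩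

lemma abs_green_le {z w : ℂ} (hz : ‖z‖ < 1) (hw : ‖w‖ < 1) :
    |Real.log ‖(1 - z * conj w) / (z - w)‖| ≤ 2 * ‖z - w‖⁻¹ := by
  rcases eq_or_ne z w with rfl | hzw
  · simp
  have hsub : 0 < ‖z - w‖ := norm_sub_pos_iff.mpr hzw
  have hone : 1 ≤ ‖1 - z * conj w‖ / ‖z - w‖ :=
    (one_le_div hsub).mpr (norm_sub_le_norm_one_sub_mul_conj hz hw)
  have htwo : ‖1 - z * conj w‖ ≤ 2 := by
    have htri := norm_sub_le 1 (z * conj w)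
    rw [norm_one, norm_mul, Complex.norm_conj] at htri
    nlinarith [norm_nonneg z, norm_nonneg w]
  rw [norm_div, abs_of_nonneg (Real.log_nonneg hone)]
  calc Real.log (‖1 - z * conj w‖ / ‖z - w‖) ≤ ‖1 - z * conj w‖ / ‖z - w‖ :=
        Real.log_le_self (zero_le_one.trans hone)
    _ ≤ 2 / ‖z - w‖ := by gcongr
    _ = 2 * ‖z - w‖⁻¹ := div_eq_mul_inv _ _

lemma abs_green_sub_green_le {x z w : ℂ} (hx : ‖x‖ < 1) (hz : ‖z‖ < 1) (hw : ‖w‖ < 1)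
    (hxw : x ≠ w) (hzw : z ≠ w) :
    |Real.log ‖(1 - x * conj w) / (x - w)‖ - Real.log ‖(1 - z * conj w) / (z - w)‖| ≤
      2 * ‖x - z‖ * (‖x - w‖⁻¹ + ‖z - w‖⁻¹) := by
  have hxw₀ : 0 < ‖x - w‖ := norm_sub_pos_iff.mpr hxw
  have hzw₀ : 0 < ‖z - w‖ := norm_sub_pos_iff.mpr hzw
  have hxD := norm_sub_le_norm_one_sub_mul_conj hx hw
  have hzD := norm_sub_le_norm_one_sub_mul_conj hz hw
  have hxD₀ := hxw₀.trans_le hxD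
  have hzD₀ := hzw₀.trans_le hzD
  have hnum : |‖1 - x * conj w‖ - ‖1 - z * conj w‖| ≤ ‖x - z‖ := by
    refine (abs_norm_sub_norm_le _ _).trans ?_
    rw [sub_sub_sub_cancel_left, ← sub_mul, norm_mul, Complex.norm_conj, norm_sub_rev]
    exact mul_le_of_le_one_right (norm_nonneg _) hw.le
  have hden : |‖x - w‖ - ‖z - w‖| ≤ ‖x - z‖ := by
    simpa using abs_norm_sub_norm_le (x - w) (z - w)
  rw [norm_div, norm_div, Real.log_div hxD₀.ne' hxw₀.ne', Real.log_div hzD₀.ne' hzw₀.ne',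
    sub_sub_sub_comm]
  calc |Real.log ‖1 - x * conj w‖ - Real.log ‖1 - z * conj w‖ -
          (Real.log ‖x - w‖ - Real.log ‖z - w‖)|
      ≤ |‖1 - x * conj w‖ - ‖1 - z * conj w‖| * (‖1 - x * conj w‖⁻¹ + ‖1 - z * conj w‖⁻¹) +
          |‖x - w‖ - ‖z - w‖| * (‖x - w‖⁻¹ + ‖z - w‖⁻¹) :=
        (abs_sub _ _).trans (add_le_add (abs_log_sub_log_le hxD₀ hzD₀)
          (abs_log_sub_log_le hxw₀ hzw₀))
    _ ≤ ‖x - z‖ * (‖x - w‖⁻¹ + ‖z - w‖⁻¹) + ‖x - z‖ * (‖x - w‖⁻¹ + ‖z - w‖⁻¹) := by gcongr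
    _ = 2 * ‖x - z‖ * (‖x - w‖⁻¹ + ‖z - w‖⁻¹) := by ring

lemma norm_innerSL_smulRight (v c : ℂ) : ‖(innerSL ℝ v).smulRight c‖ = ‖v‖ * ‖c‖ := by
  rw [ContinuousLinearMap.norm_smulRight_apply, innerSL_apply_norm]

section GreenPotential

variable {g : ℂ → ℂ} {M : ℝ} {z : ℂ}

lemma integrableOn_green_mul (hg : AEStronglyMeasurable g (volume.restrict (ball 0 1)))
    (hM : ∀ w ∈ ball 0 1, ‖g w‖ ≤ M) (hz : ‖z‖ < 1) :
    IntegrableOn (fun w => (Real.log ‖(1 - z * conj w) / (z - w)‖ : ℂ) * g w) (ball 0 1) := by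
  have hmeas : Measurable fun w => (Real.log ‖(1 - z * conj w) / (z - w)‖ : ℂ) := by fun_prop
  have hint := integrableOn_norm_sub_inv (ν := volume) one_lt_finrank_complex
    (isBounded_ball (x := (0 : ℂ)) (r := 1)) z
  refine ((hint.const_mul 2).mul_const M).mono' (hmeas.aestronglyMeasurable.mul hg) ?_
  filter_upwards [self_mem_ae_restrict measurableSet_ball] with w hw
  rw [norm_mul, Complex.norm_real, Real.norm_eq_abs]
  gcongr
  · exact abs_green_le hz (mem_ball_zero_iff.mp hw)
  · exact hM w hw

lemma integrableOn_greenGradient_smulRight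
    (hg : AEStronglyMeasurable g (volume.restrict (ball 0 1)))
    (hM : ∀ w ∈ ball 0 1, ‖g w‖ ≤ M) (hz : ‖z‖ < 1) :
    IntegrableOn (fun w => (innerSL ℝ (greenGradient z w)).smulRight (g w)) (ball 0 1) := by
  have hgrad := integrableOn_greenGradient hz
  refine (hgrad.norm.mul_const M).mono' ?_ ?_
  · exact (ContinuousLinearMap.smulRightL ℝ ℂ ℂ).aestronglyMeasurable_comp₂
      ((innerSL ℝ).continuous.comp_aestronglyMeasurable hgrad.aestronglyMeasurable) hg
  · filter_upwards [self_mem_ae_restrict measurableSet_ball] with w hw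
    rw [norm_innerSL_smulRight]
    exact mul_le_mul_of_nonneg_left (hM w hw) (norm_nonneg _)

theorem hasFDerivAt_greenPotential (hg : AEStronglyMeasurable g (volume.restrict (ball 0 1)))
    (hM : ∀ w ∈ ball 0 1, ‖g w‖ ≤ M) (hz : ‖z‖ < 1) :
    HasFDerivAt (greenPotential g) ((1 / (2 * Real.pi) : ℝ) •
      ∫ w in ball 0 1, (innerSL ℝ (greenGradient z w)).smulRight (g w)) z := by
  have hM₀ : 0 ≤ M := (norm_nonneg _).trans (hM 0 (mem_ball_self one_pos))
  have hnhds : ∀ᶠ x in 𝓝 z, ‖x‖ < 1 := continuous_norm.continuousAt.eventually_lt_const hz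
  have hae : ∀ x : ℂ, ∀ᵐ w ∂volume.restrict (ball (0 : ℂ) 1), w ∈ ball (0 : ℂ) 1 ∧ w ≠ x := by
    intro x
    filter_upwards [self_mem_ae_restrict measurableSet_ball,
      ae_restrict_of_ae (Measure.ae_ne volume x)] with w hw hwx using ⟨hw, hwx⟩
  refine HasFDerivAt.const_smul (hasFDerivAt_integral_of_weaklySingular (C := 2 * M)
    one_lt_finrank_complex isBounded_ball (by positivity)
    (hnhds.mono fun x hx => integrableOn_green_mul hg hM hx)
    (integrableOn_greenGradient_smulRight hg hM hz) ?_ ?_) (1 / (2 * Real.pi) : ℝ)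
  · filter_upwards [hnhds] with x hx
    filter_upwards [hae x, hae z] with w ⟨hw, hwx⟩ ⟨_, hwz⟩
    rw [← sub_mul, ← Complex.ofReal_sub, norm_mul, Complex.norm_real, Real.norm_eq_abs]
    have := abs_green_sub_green_le hx hz (mem_ball_zero_iff.mp hw) hwx.symm hwz.symm
    calc _ ≤ 2 * ‖x - z‖ * (‖x - w‖⁻¹ + ‖z - w‖⁻¹) * M :=
          mul_le_mul this (hM w hw) (norm_nonneg _) (by positivity)
      _ = _ := by ring
  · filter_upwards [hae z] with w ⟨hw, hwz⟩
    have hgreen := (hasGradientAt_green hz (mem_ball_zero_iff.mp hw) hwz.symm).hasFDerivAt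
    exact hgreen.smul_const (g w)

theorem norm_fderiv_greenPotential_le
    (hg : AEStronglyMeasurable g (volume.restrict (ball 0 1)))
    (hM : ∀ w ∈ ball 0 1, ‖g w‖ ≤ M) (hz : ‖z‖ < 1) (hz₀ : z ≠ 0) :
    ‖fderiv ℝ (greenPotential g) z‖ ≤ 2 * mu M ‖z‖ := by
  rw [(hasFDerivAt_greenPotential hg hM hz).fderiv, norm_smul, Real.norm_of_nonneg (by positivity)]
  calc (1 / (2 * Real.pi)) * ‖∫ w in ball 0 1, (innerSL ℝ (greenGradient z w)).smulRight (g w)‖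
      ≤ (1 / (2 * Real.pi)) * ∫ w in ball 0 1, ‖greenGradient z w‖ * M := by
        gcongr
        refine norm_integral_le_of_norm_le ((integrableOn_greenGradient hz).norm.mul_const M) ?_
        filter_upwards [self_mem_ae_restrict measurableSet_ball] with w hw
        rw [norm_innerSL_smulRight]
        exact mul_le_mul_of_nonneg_left (hM w hw) (norm_nonneg _)
    _ = 2 * mu M ‖z‖ := by
        rw [integral_mul_const, integral_norm_greenGradient hz hz₀, mu, mu]
        field_simp
        ring

end GreenPotential

lemma norm_le_supD {h : ℂ → ℂ} (hh : BddAbove ((fun z => ‖h z‖) '' ball 0 1)) :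
    ∀ z ∈ ball 0 1, ‖h z‖ ≤ supD h :=
  fun _ hz => le_csSup hh (mem_image_of_mem _ hz)

lemma circleIntegrable_of_intervalIntegrable_exp {ψ : ℂ → ℂ}
    (hψ : IntervalIntegrable (fun t : ℝ => ψ (Complex.exp (Complex.I * t))) volume 0
      (2 * Real.pi)) : CircleIntegrable ψ 0 1 := by
  simpa only [CircleIntegrable, exp_I_mul_eq_circleMap] using hψ

lemma bddAbove_norm_poissonIntegral {ψ : ℂ → ℂ} {C : ℝ} (hψ : CircleIntegrable ψ 0 1)
    (hC : ∀ ζ ∈ sphere 0 1, ‖ψ ζ‖ ≤ C) :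
    BddAbove ((fun z => ‖poissonIntegral ψ z‖) '' ball 0 1) :=
  ⟨C, forall_mem_image.mpr fun _ hz => norm_poissonIntegral_le hψ hC hz⟩

theorem stmt3_general {g ψ f : ℂ → ℂ} (hg : AEStronglyMeasurable g (volume.restrict (ball 0 1)))
    (hgbdd : BddAbove ((fun z => ‖g z‖) '' ball 0 1)) (hψ : CircleIntegrable ψ 0 1)
    (hPbdd : BddAbove ((fun z => ‖poissonIntegral ψ z‖) '' ball 0 1))
    (hf : ∀ z ∈ ball 0 1, f z = poissonIntegral ψ z - greenPotential g z) {z : ℂ}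
    (hz : z ∈ ball 0 1) (hz₀ : z ≠ 0) :
    DifferentiableAt ℝ f z ∧
      ‖wdz f z‖ + ‖wdzbar f z‖ ≤
        4 * supD (poissonIntegral ψ) / Real.pi * (1 / (1 - ‖z‖ ^ 2)) + 2 * mu (supD g) ‖z‖ := by
  have hz₁ := mem_ball_zero_iff.mp hz
  have hfeq : f =ᶠ[𝓝 z] fun x => poissonIntegral ψ x - greenPotential g x :=
    eventually_of_mem (isOpen_ball.mem_nhds hz) hf
  have hP := differentiableAt_poissonIntegral hψ hz
  have hG := (hasFDerivAt_greenPotential hg (norm_le_supD hgbdd) hz₁).differentiableAt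
  refine ⟨(hP.sub hG).congr_of_eventuallyEq hfeq, ?_⟩
  rw [norm_wdz_add_norm_wdzbar, hfeq.fderiv_eq, fderiv_fun_sub hP hG]
  exact (norm_sub_le _ _).trans (add_le_add
    (norm_fderiv_poissonIntegral_le hψ (norm_le_supD hPbdd) hz)
    (norm_fderiv_greenPotential_le hg (norm_le_supD hgbdd) hz₁ hz₀))

/-- Schwarz–Pick type estimate for solutions of the Poisson equation (Theorem 1.4). -/
theorem stmt3 (g ψ f : ℂ → ℂ)
    (hg : ContinuousOn g (closedBall (0:ℂ) 1))
    (hψint : IntervalIntegrable (fun t : ℝ => ψ (Complex.exp (Complex.I * (t : ℂ))))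
      MeasureTheory.volume 0 (2 * Real.pi))
    (hψbdd : ∃ C : ℝ, ∀ ζ ∈ sphere (0:ℂ) 1, ‖ψ ζ‖ ≤ C)
    (hf : ∀ z ∈ ball (0:ℂ) 1, f z = poissonIntegral ψ z - greenPotential g z) :
    ∀ z ∈ ball (0:ℂ) 1, z ≠ 0 →
      ‖wdz f z‖ + ‖wdzbar f z‖ ≤
        4 * supD (poissonIntegral ψ) / Real.pi * (1 / (1 - ‖z‖ ^ 2)) +
          2 * mu (supD g) ‖z‖ := by
  intro z hz hz₀
  obtain ⟨C, hC⟩ := hψbdd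
  have hψ := circleIntegrable_of_intervalIntegrable_exp hψint
  exact (stmt3_general
    ((hg.mono ball_subset_closedBall).aestronglyMeasurable measurableSet_ball)
    (((isCompact_closedBall 0 1).bddAbove_image hg.norm).mono (image_mono ball_subset_closedBall))
    hψ (bddAbove_norm_poissonIntegral hψ hC) hf hz hz₀).2
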